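/- First gradient step from zero initialization: consider the multi-head attention model with logistic empirical risk L̂_{n1} over n1 training samples (X_i, y_i), initialize every head at zero (θ_h^(0) = 0, i.e., U_h^(0) = 0 and W_h^(0) = 0 for all h ∈ [H]), and perform the per-head update θ_h^(1) = θ_h^(0) − α_h √H · ∇_{θ_h} L̂_{n1}(θ̃^(0)) with per-head step sizes α_h ∈ R. Then for every h ∈ [H]: W_h^(1) = 0, and U_h^(1) = (α_h/(2 n1 T)) · 1_T · (Σ_{i=1}^{n1} y_i Σ_{t=1}^T x_{i,t})^T; in particular every row of U_h^(1) equals the vector (α_h/(2 n1 T)) · Σ_{i=1}^{n1} y_i Σ_{t=1}^T x_{i,t} ∈ R^d. -/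

import Mathlib

/-!
The risk is differentiable, so each coordinate of its gradient at `0` is the derivative of the
risk along the corresponding coordinate axis (`gradient_apply_eq_deriv`). Along a `W`-axis all
`U_h` vanish, so the model is identically `0` and the risk is constant. Along a `U`-axis all
`W_h` vanish, the softmax is uniform (`smax_zero`), and the model is linear in the axis
coordinate with slope `(1/√H) (1/T) Σ_s x_{s,j}`; the chain rule with `ℓ'(0) = -1/2`
(`hasDerivAt_logistic`) gives the stated value, the factors `√H` cancelling.
-/

open Finset
open scoped RealInnerProductSpace

/-- The softmax map `φ : ℝ^T → ℝ^T`, `φ(v)_t = exp(v_t) / Σ_s exp(v_s)`. -/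
noncomputable def smax {T : ℕ} (v : Fin T → ℝ) : Fin T → ℝ :=
  fun t => Real.exp (v t) / ∑ s, Real.exp (v s)

/-- The softmax logits: the `(t, s)` entry of `X W Xᵀ`, i.e. `xₜᵀ W x_s`. -/
noncomputable def attnScores {T d : ℕ} (X : Fin T → Fin d → ℝ)
    (W : Fin d → Fin d → ℝ) (t : Fin T) : Fin T → ℝ :=
  fun s => ∑ j, ∑ k, X t j * W j k * X s k

/-- The single-head attention model `Φ(X; U, W) = ⟨U, φ(X W Xᵀ) X⟩`. -/
noncomputable def attnPhi {T d : ℕ} (X U : Fin T → Fin d → ℝ)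
    (W : Fin d → Fin d → ℝ) : ℝ :=
  ∑ t, ∑ t', smax (attnScores X W t) t' * ∑ j, U t j * X t' j

/-- Index set for the parameters `θ_h = concat(U_h, W_h) ∈ ℝ^{Td + d²}` of one head. -/
abbrev HeadIx (T d : ℕ) := (Fin T × Fin d) ⊕ (Fin d × Fin d)

/-- Parameter space `ℝ^{H(Td + d²)}` of the `H`-head model, with Euclidean norm. -/
abbrev Params (T d H : ℕ) := EuclideanSpace ℝ (Fin H × HeadIx T d)

/-- The matrix `U_h` of the `h`-th head. -/
noncomputable def headU {T d H : ℕ} (θ : Params T d H) (h : Fin H) :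
    Fin T → Fin d → ℝ := fun t j => θ (h, Sum.inl (t, j))

/-- The matrix `W_h` of the `h`-th head. -/
noncomputable def headW {T d H : ℕ} (θ : Params T d H) (h : Fin H) :
    Fin d → Fin d → ℝ := fun j k => θ (h, Sum.inr (j, k))

/-- The multi-head attention model `Φ̃(X; θ̃) = (1/√H) Σ_h Φ(X; U_h, W_h)`. -/
noncomputable def mhPhi {T d H : ℕ} (X : Fin T → Fin d → ℝ) (θ : Params T d H) : ℝ :=
  (1 / Real.sqrt H) * ∑ h, attnPhi X (headU θ h) (headW θ h)

/-- The logistic empirical risk `L̂(θ̃) = (1/n) Σᵢ log(1 + exp(−yᵢ Φ̃(Xᵢ; θ̃)))`. -/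
noncomputable def empLoss {T d H n : ℕ} (X : Fin n → Fin T → Fin d → ℝ)
    (y : Fin n → ℝ) (θ : Params T d H) : ℝ :=
  (1 / (n : ℝ)) * ∑ i, Real.log (1 + Real.exp (-(y i * mhPhi (X i) θ)))

/-- `‖θ̃‖_{2,∞} = max_h ‖θ_h‖`: the maximum Euclidean norm over heads. -/
noncomputable def maxHeadNorm {T d H : ℕ} (θ : Params T d H) : ℝ :=
  ⨆ h : Fin H, Real.sqrt (∑ p : HeadIx T d, θ (h, p) ^ 2)

/-- Bounded-data assumption: `R ≥ 1`, labels in `{±1}`, and every token has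
Euclidean norm at most `R`. -/
def BoundedData {T d n : ℕ} (X : Fin n → Fin T → Fin d → ℝ)
    (y : Fin n → ℝ) (R : ℝ) : Prop :=
  1 ≤ R ∧ (∀ i, y i = 1 ∨ y i = -1) ∧
    ∀ i t, Real.sqrt (∑ j, X i t j ^ 2) ≤ R

/-- `β₁(θ̃) = √T R (2R² ‖θ̃‖_{2,∞} + 1)`. -/
noncomputable def beta1 {T d H : ℕ} (R : ℝ) (θ : Params T d H) : ℝ :=
  Real.sqrt T * R * (2 * R ^ 2 * maxHeadNorm θ + 1)

/-- `β₃(θ̃) = 2 d √(T d) R³ (3 √d R² ‖θ̃‖_{2,∞} + 1)`. -/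
noncomputable def beta3 {T d H : ℕ} (R : ℝ) (θ : Params T d H) : ℝ :=
  2 * (d : ℝ) * Real.sqrt ((T : ℝ) * d) * R ^ 3 *
    (3 * Real.sqrt d * R ^ 2 * maxHeadNorm θ + 1)

lemma smax_zero {T : ℕ} (t : Fin T) : smax (0 : Fin T → ℝ) t = 1 / T := by
  simp [smax]

lemma attnPhi_zero_left {T d : ℕ} (X : Fin T → Fin d → ℝ) (W : Fin d → Fin d → ℝ) :
    attnPhi X 0 W = 0 := by
  simp [attnPhi]

lemma attnPhi_zero_right {T d : ℕ} (X U : Fin T → Fin d → ℝ) :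
    attnPhi X U 0 = ∑ t, ∑ t', 1 / (T : ℝ) * ∑ j, U t j * X t' j := by
  have h : ∀ t, attnScores X 0 t = 0 := fun t => by
    funext s
    simp [attnScores]
  simp only [attnPhi, h, smax_zero]

lemma differentiable_mhPhi {T d H : ℕ} (X : Fin T → Fin d → ℝ) :
    Differentiable ℝ (mhPhi X : Params T d H → ℝ) := by
  unfold mhPhi attnPhi smax attnScores headU headW
  -- The index `t` ranges over a nonempty type, so the softmax denominator is positive.
  have hpos : ∀ (t : Fin T) (v : Fin T → ℝ), ∑ s, Real.exp (v s) ≠ 0 := fun t v =>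
    (Finset.sum_pos (fun s _ => Real.exp_pos (v s)) ⟨t, Finset.mem_univ t⟩).ne'
  simp only [div_eq_mul_inv]
  refine Differentiable.const_mul (Differentiable.fun_sum fun h _ =>
    Differentiable.fun_sum fun t _ => Differentiable.fun_sum fun t' _ =>
      Differentiable.mul (Differentiable.mul ?_ (Differentiable.fun_inv ?_ fun θ => hpos t _)) ?_) _
    <;> fun_prop

lemma differentiable_empLoss {T d H n : ℕ} (X : Fin n → Fin T → Fin d → ℝ) (y : Fin n → ℝ) :
    Differentiable ℝ (empLoss X y : Params T d H → ℝ) := by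
  unfold empLoss
  refine Differentiable.const_mul (Differentiable.fun_sum fun i _ =>
    Differentiable.log ?_ fun θ => by positivity) _
  have := differentiable_mhPhi (H := H) (X i)
  fun_prop

lemma gradient_apply_eq_deriv {ι : Type*} [Fintype ι] [DecidableEq ι]
    {f : EuclideanSpace ℝ ι → ℝ} (hf : DifferentiableAt ℝ f 0) (q : ι) :
    gradient f 0 q = deriv (fun s : ℝ => f (s • EuclideanSpace.single q 1)) 0 := by
  have h1 : gradient f 0 q = fderiv ℝ f 0 (EuclideanSpace.single q 1) := by
    have := InnerProductSpace.toDual_symm_apply (𝕜 := ℝ) (x := EuclideanSpace.single q (1 : ℝ))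
      (y := fderiv ℝ f 0)
    rw [← this, EuclideanSpace.inner_single_right]
    simp [gradient]
  have h2 := hf.lineDeriv_eq_fderiv (v := EuclideanSpace.single q (1 : ℝ))
  rw [h1, ← h2]
  simp [lineDeriv]

/-- Chain rule for the logistic loss at `0` along a line: `ℓ'(0) = -1/2`. -/
lemma hasDerivAt_logistic (c : ℝ) :
    HasDerivAt (fun s : ℝ => Real.log (1 + Real.exp (-(s * c)))) (-(c / 2)) 0 := by
  have h : HasDerivAt (fun s : ℝ => 1 + Real.exp (-(s * c)))
      (Real.exp (-(0 * c)) * -(1 * c)) 0 :=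
    (((hasDerivAt_id (0 : ℝ)).mul_const c).neg.exp).const_add 1
  convert h.log (by positivity) using 1
  norm_num
  ring

lemma mhPhi_line_W {T d H : ℕ} (X : Fin T → Fin d → ℝ) (h : Fin H) (p : Fin d × Fin d) (s : ℝ) :
    mhPhi X (s • EuclideanSpace.single (h, Sum.inr p) 1 : Params T d H) = 0 := by
  have hU : ∀ h', headU (s • EuclideanSpace.single (h, Sum.inr p) 1 : Params T d H) h' = 0 := by
    intro h'
    funext t j
    simp [headU]
  simp [mhPhi, hU, attnPhi_zero_left]

lemma mhPhi_line_U {T d H : ℕ} (X : Fin T → Fin d → ℝ) (h : Fin H) (t : Fin T) (j : Fin d)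
    (s : ℝ) :
    mhPhi X (s • EuclideanSpace.single (h, Sum.inl (t, j)) 1 : Params T d H) =
      s * (1 / Real.sqrt H * (1 / T * ∑ t', X t' j)) := by
  have hW : ∀ h', headW (s • EuclideanSpace.single (h, Sum.inl (t, j)) 1 : Params T d H) h' = 0 := by
    intro h'
    funext k l
    simp [headW]
  simp only [mhPhi, hW, attnPhi_zero_right]
  have hsum : ∑ h' : Fin H, ∑ u : Fin T, ∑ t' : Fin T, 1 / (T : ℝ) * ∑ k,
      headU (s • EuclideanSpace.single (h, Sum.inl (t, j)) 1 : Params T d H) h' u k * X t' k =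
      ∑ t' : Fin T, 1 / (T : ℝ) * (s * X t' j) := by
    rw [Finset.sum_eq_single h (fun h' _ hh => by simp [headU, hh]) (by simp),
      Finset.sum_eq_single t (fun u _ hu => by simp [headU, hu]) (by simp)]
    refine Finset.sum_congr rfl fun t' _ => ?_
    rw [Finset.sum_eq_single j (fun k _ hk => by simp [headU, hk]) (by simp)]
    simp [headU]
  rw [hsum, ← Finset.mul_sum, ← Finset.mul_sum]
  ring

/-- **First gradient step from zero initialization.** Initialize
every head at zero and perform the per-head update
`θ_h^(1) = θ_h^(0) − α_h √H ∇_{θ_h} L̂_{n₁}(θ̃^(0))` with per-head step sizes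
`α_h ∈ ℝ`. Then for every head `h`: `W_h^(1) = 0`, and every row of `U_h^(1)`
equals the vector `(α_h/(2 n₁ T)) Σᵢ yᵢ Σ_t x_{i,t} ∈ ℝ^d`. -/
theorem first_gradient_step_zero_init {T d H n1 : ℕ} (hn1 : 0 < n1) (hT : 0 < T)
    (X : Fin n1 → Fin T → Fin d → ℝ) (y : Fin n1 → ℝ)
    (hy : ∀ i, y i = 1 ∨ y i = -1)
    (α : Fin H → ℝ)
    (θ1 : Params T d H)
    (hθ1 : ∀ q : Fin H × HeadIx T d,
      θ1 q = -(α q.1 * Real.sqrt H * gradient (empLoss X y) (0 : Params T d H) q)) :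
    ∀ h : Fin H,
      (∀ j k : Fin d, θ1 (h, Sum.inr (j, k)) = 0) ∧
      (∀ (t : Fin T) (j : Fin d),
        θ1 (h, Sum.inl (t, j)) =
          α h / (2 * (n1 : ℝ) * T) * ∑ i, y i * ∑ t', X i t' j) := by
  intro h
  refine ⟨fun j k => ?_, fun t j => ?_⟩
  · rw [hθ1, gradient_apply_eq_deriv (differentiable_empLoss X y 0)]
    simp [empLoss, mhPhi_line_W]
  · rw [hθ1, gradient_apply_eq_deriv (differentiable_empLoss X y 0)]
    have hH : Real.sqrt H ≠ 0 := by
      have : 0 < H := h.pos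
      positivity
    have hd : HasDerivAt (fun s : ℝ => empLoss X y
        (s • EuclideanSpace.single (h, Sum.inl (t, j)) 1 : Params T d H))
        (1 / (n1 : ℝ) * ∑ i, -(y i * (1 / Real.sqrt H * (1 / T * ∑ t', X i t' j)) / 2)) 0 := by
      simp only [empLoss, mhPhi_line_U, mul_left_comm (y _)]
      exact (HasDerivAt.fun_sum fun i _ => hasDerivAt_logistic _).const_mul _
    rw [hd.deriv]
    simp only [Finset.mul_sum, ← Finset.sum_neg_distrib]
    refine Finset.sum_congr rfl fun i _ => ?_
    simp only [← Finset.mul_sum]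
    field_simp
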